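/- Characterization of entire local minimizers: fix α>0, β>0 and M ∈ ℝ, and let H = (1/2)(6α/(βM²))^{1/3} and V = MH (with the canonical (H,V)-staircase identically 0 when M=0). Then the set of entire local minimizers of the functional JF(α,β,Mx,·,·) coincides with the set Obl(H,V) of oblique translations of the canonical (H,V)-staircase; in particular, when M=0 the unique entire local minimizer is the zero function. -/

import Mathlib

/-!
Let `M ≠ 0` and `γ = βM²`. The choice of `H` amounts to `α = (4/3)γH³`, the equation for which the
step length `2H` minimizes the energy per unit length among equispaced staircases; the minimal
value is `γH²`.

Staircases of step length `2H` are minimizers by calibration. Let `g` be the primitive of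
`s ↦ s² - H²` on `[-H, H]`, extended by constants, and `Φ(x, c) = γ(H²x + g(x - c/M))`. On a flat
piece the increment of `Φ` is at most the fidelity term, because `s² - H² ≥ 0` outside `[-H, H]`.
At a jump it is at most `γ(max g - min g) = (4/3)γH³ = α`. Both are equalities for the staircase, on
whose steps `x - c/M` runs from `-H` to `H`. Hence the boundary values of a competitor already bound
its energy from below by that of the staircase.

Conversely, pasting a competitor into a minimizer creates at most two new jumps, and none at all
between two jump points. Comparison with equispaced staircases gives the energy bound
`γH²(b - a) + 2α` on every interval, which forces a jump in every interval of length `6H`. Between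
consecutive jumps the value is the mean of `Mx`, hence that at the midpoint, and comparison with
two equal steps shows that neighbouring steps have the same length `l`. A minimizer is therefore an
equispaced staircase. The energy bound on `n` steps, divided by `n → ∞`, gives
`(l + 4H)(l - 2H)² ≤ 0`, so `l = 2H`.

For `M = 0`, comparison with `0` shows that a minimizer vanishes between any two jumps, and that
a value taken on arbitrarily long intervals is `0`.
-/

open MeasureTheory Filter Set

namespace PeronaMalik

/-- `a_{δ,*} = δ⌊a/δ⌋`, the lower `δ`-approximation of `a`. -/
noncomputable def lowGrid (δ a : ℝ) : ℝ := δ * (⌊a / δ⌋ : ℤ)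

/-- `b_δ^* = δ⌈b/δ⌉`, the upper `δ`-approximation of `b`. -/
noncomputable def highGrid (δ b : ℝ) : ℝ := δ * (⌈b / δ⌉ : ℤ)

/-- `u` is piecewise constant at scale `δ`: constant on every interval `[zδ, (z+1)δ)`. -/
def IsPC (δ : ℝ) (u : ℝ → ℝ) : Prop :=
  ∀ z : ℤ, ∀ x ∈ Set.Ico ((z : ℝ) * δ) (((z : ℝ) + 1) * δ), u x = u ((z : ℝ) * δ)

/-- Discrete derivative `D^δ u (x) = (u(x+δ) - u(x))/δ`. -/
noncomputable def Dd (δ : ℝ) (u : ℝ → ℝ) (x : ℝ) : ℝ := (u (x + δ) - u x) / δ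

/-- The discrete Perona–Malik functional with fidelity term on `(a,b)`. -/
noncomputable def DPMF (n : ℕ) (β : ℝ) (f : ℝ → ℝ) (a b : ℝ) (u : ℝ → ℝ) : ℝ :=
  (∫ x in lowGrid (1 / (n : ℝ)) a..(highGrid (1 / (n : ℝ)) b - 1 / (n : ℝ)),
      Real.log (1 + (Dd (1 / (n : ℝ)) u x) ^ 2)) +
    β * ∫ x in a..b, (u x - f x) ^ 2

/-- `u` is a minimizer of `DPMF n β f (0,1)` over `PC_{1/n}(0,1)`. -/
def IsMinimizer (n : ℕ) (β : ℝ) (f : ℝ → ℝ) (u : ℝ → ℝ) : Prop :=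
  IsPC (1 / (n : ℝ)) u ∧
    ∀ v : ℝ → ℝ, IsPC (1 / (n : ℝ)) v → DPMF n β f 0 1 u ≤ DPMF n β f 0 1 v

/-- `m(n,β,f)`, the minimum value of the discrete Perona–Malik functional. -/
noncomputable def mval (n : ℕ) (β : ℝ) (f : ℝ → ℝ) : ℝ :=
  sInf ((fun u => DPMF n β f 0 1 u) '' {u | IsPC (1 / (n : ℝ)) u})

/-- `ω(n) = (log n / n)^{1/3}`. -/
noncomputable def omg (n : ℕ) : ℝ := (Real.log n / n) ^ ((1 : ℝ) / 3)

/-- `δ(n) = 1/(n ω(n))`. -/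
noncomputable def dlt (n : ℕ) : ℝ := 1 / ((n : ℝ) * omg n)

/-- The rescaled discrete Perona–Malik functional. -/
noncomputable def RDPM (n : ℕ) (a b : ℝ) (u : ℝ → ℝ) : ℝ :=
  (1 / omg n ^ 2) *
    ∫ x in lowGrid (dlt n) a..(highGrid (dlt n) b - dlt n),
      Real.log (1 + (Dd (dlt n) u x) ^ 2)

/-- The rescaled discrete Perona–Malik functional with fidelity term. -/
noncomputable def RDPMF (n : ℕ) (β : ℝ) (f : ℝ → ℝ) (a b : ℝ) (u : ℝ → ℝ) : ℝ :=
  RDPM n a b u + β * ∫ x in Set.Ioo a b, (u x - f x) ^ 2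

/-- `u` is a step function with finitely many jumps on `(a,b)`. -/
def IsStep (a b : ℝ) (u : ℝ → ℝ) : Prop :=
  ∃ (s : Finset ℝ) (c : ℝ) (J : ℝ → ℝ),
    (∀ p ∈ s, p ∈ Set.Ioo a b ∧ J p ≠ 0) ∧
    ∀ x ∈ Set.Ioo a b, u x = c + ∑ p ∈ s, (if p ≤ x then J p else 0)

/-- The set of jump (discontinuity) points of `u` inside `(a,b)`. -/
def jumpSet (a b : ℝ) (u : ℝ → ℝ) : Set ℝ :=
  {x ∈ Set.Ioo a b | ¬ ContinuousAt u x}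

/-- The limit functional `JF(α,β,f,(a,b),u) = α·#jumps + β∫(u-f)²`. -/
noncomputable def JF (α β : ℝ) (f : ℝ → ℝ) (a b : ℝ) (u : ℝ → ℝ) : ℝ :=
  α * ((jumpSet a b u).ncard : ℝ) + β * ∫ x in Set.Ioo a b, (u x - f x) ^ 2

/-- Strict convergence in `BV((a,b))`: `L¹` convergence plus convergence of
total variations. -/
def StrictBV (useq : ℕ → ℝ → ℝ) (u : ℝ → ℝ) (a b : ℝ) : Prop :=
  Tendsto (fun k => ∫ x in Set.Ioo a b, |useq k x - u x|) atTop (nhds 0) ∧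
  Tendsto (fun k => eVariationOn (useq k) (Set.Ioo a b)) atTop
    (nhds (eVariationOn u (Set.Ioo a b)))

/-- Locally strict convergence in `BV_loc(ℝ)`: strict convergence on every bounded
interval whose endpoints are not jump points of the limit. -/
def LocStrictBV (useq : ℕ → ℝ → ℝ) (u : ℝ → ℝ) : Prop :=
  ∀ a b : ℝ, a < b → ContinuousAt u a → ContinuousAt u b → StrictBV useq u a b

/-- `S(x) = 2⌊(x+1)/2⌋`. -/
noncomputable def stairS (x : ℝ) : ℝ := 2 * (⌊(x + 1) / 2⌋ : ℤ)

/-- The canonical `(H,V)`-staircase `S_{H,V}(x) = V·S(x/H)`. -/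
noncomputable def canStair (H V : ℝ) (x : ℝ) : ℝ := V * stairS (x / H)

/-- Oblique translations of the canonical `(H,V)`-staircase. -/
def Obl (H V : ℝ) (v : ℝ → ℝ) : Prop :=
  ∃ τ ∈ Set.Icc (-1 : ℝ) 1, ∀ x, v x = canStair H V (x - H * τ) + V * τ

/-- Graph translations of horizontal type of the canonical `(H,V)`-staircase. -/
def Orz (H V : ℝ) (v : ℝ → ℝ) : Prop :=
  ∃ τ ∈ Set.Icc (-1 : ℝ) 1, ∀ x, v x = canStair H V (x - H * τ)

/-- `μ_n(β,L,M)`: minimum of the rescaled functional with affine forcing term. -/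
noncomputable def muDisc (n : ℕ) (β L M : ℝ) : ℝ :=
  sInf ((fun u => RDPMF n β (fun x => M * x) 0 L u) '' {u | IsPC (dlt n) u})

/-- `μ*_n(β,L,M)`: same as `μ_n` but with boundary conditions `u(0)=0`, `u(L^*)=ML`. -/
noncomputable def muDiscStar (n : ℕ) (β L M : ℝ) : ℝ :=
  sInf ((fun u => RDPMF n β (fun x => M * x) 0 L u) ''
    {u | IsPC (dlt n) u ∧ u 0 = 0 ∧ u (highGrid (dlt n) L - dlt n) = M * L})

/-- `μ(α,β,L,M)`: minimum of the limit functional with affine forcing term. -/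
noncomputable def muLim (α β L M : ℝ) : ℝ :=
  sInf ((fun u => JF α β (fun x => M * x) 0 L u) '' {u | IsStep 0 L u})

/-- `μ*(α,β,L,M)`: same as `μ` but with boundary values `u(0⁺)=0`, `u(L⁻)=ML`. -/
noncomputable def muLimStar (α β L M : ℝ) : ℝ :=
  sInf ((fun u => JF α β (fun x => M * x) 0 L u) ''
    {u | IsStep 0 L u ∧ Tendsto u (nhdsWithin 0 (Set.Ioi 0)) (nhds 0) ∧
         Tendsto u (nhdsWithin L (Set.Iio L)) (nhds (M * L))})

/-- `u` and `v` have the same boundary values `u(a⁺)=v(a⁺)`, `u(b⁻)=v(b⁻)`. -/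
def SameBdry (a b : ℝ) (u v : ℝ → ℝ) : Prop :=
  (∀ c : ℝ, Tendsto v (nhdsWithin a (Set.Ioi a)) (nhds c) →
     Tendsto u (nhdsWithin a (Set.Ioi a)) (nhds c)) ∧
  (∀ c : ℝ, Tendsto v (nhdsWithin b (Set.Iio b)) (nhds c) →
     Tendsto u (nhdsWithin b (Set.Iio b)) (nhds c))

/-- `v` is a local minimizer for `JF(α,β,f,(a,b),·)` among step functions with the
same boundary values. -/
def IsLocalMinJF (α β : ℝ) (f : ℝ → ℝ) (a b : ℝ) (v : ℝ → ℝ) : Prop :=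
  IsStep a b v ∧
  ∀ u : ℝ → ℝ, IsStep a b u → SameBdry a b u v → JF α β f a b v ≤ JF α β f a b u

/-- `v` is an entire local minimizer for `JF(α,β,f,·,·)`. -/
def IsEntireLocalMinJF (α β : ℝ) (f : ℝ → ℝ) (v : ℝ → ℝ) : Prop :=
  ∀ a b : ℝ, a < b → IsLocalMinJF α β f a b v

/-- `v` is a local minimizer for `RDPMF_n(β,f,(a,b),·)` among piecewise constant
functions with the same boundary values. -/
def IsLocalMinRDPMF (n : ℕ) (β : ℝ) (f : ℝ → ℝ) (a b : ℝ) (v : ℝ → ℝ) : Prop :=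
  IsPC (dlt n) v ∧
  ∀ u : ℝ → ℝ, IsPC (dlt n) u →
    u (lowGrid (dlt n) a) = v (lowGrid (dlt n) a) →
    u (highGrid (dlt n) b - dlt n) = v (highGrid (dlt n) b - dlt n) →
    RDPMF n β f a b v ≤ RDPMF n β f a b u

open scoped Topology
open Function (leftLim rightLim)

variable {a b p q : ℝ} {u v w f : ℝ → ℝ} {s t : Set ℝ}

/-! ### Step functions -/

/-- `u` is piecewise constant on `(a, b)` with break points in `s`. The values at `x` and `y` can
only be separated by points of the half-open interval `(x, y]`, because step functions are
normalized to be continuous from the right. -/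
def ConstBetween (s : Set ℝ) (a b : ℝ) (u : ℝ → ℝ) : Prop :=
  ∀ ⦃x y⦄, a < x → x ≤ y → y < b → Disjoint (Ioc x y) s → u x = u y

lemma ConstBetween.mono (h : ConstBetween s a b u) (hst : ∀ x ∈ Ioo p q, x ∈ s → x ∈ t)
    (ha : a ≤ p) (hb : q ≤ b) : ConstBetween t p q u := fun _ _ hx hxy hy ht =>
  h (ha.trans_lt hx) hxy (hy.trans_le hb) <| disjoint_left.2 fun z hz hzs =>
    disjoint_left.1 ht hz (hst z ⟨hx.trans hz.1, hz.2.trans_lt hy⟩ hzs)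

lemma ConstBetween.inter_Ioo (h : ConstBetween s a b u) : ConstBetween (s ∩ Ioo a b) a b u :=
  h.mono (fun _ hx hmem => ⟨hmem, hx⟩) le_rfl le_rfl

lemma ConstBetween.exists_eq_const (h : ConstBetween s a b u) (ha : a ≤ p) (hb : q ≤ b)
    (hs : Disjoint (Ioo p q) s) : ∃ c, ∀ x ∈ Ioo p q, u x = c := by
  rcases (Ioo p q).eq_empty_or_nonempty with hpq | ⟨z, hz⟩
  · simp [hpq]
  have eq_of_le : ∀ x ∈ Ioo p q, ∀ y ∈ Ioo p q, x ≤ y → u x = u y := fun x hx y hy hxy =>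
    h (ha.trans_lt hx.1) hxy (hy.2.trans_le hb) <|
      hs.mono_left ((Ioc_subset_Ioo_right hy.2).trans (Ioo_subset_Ioo_left hx.1.le))
  exact ⟨u z, fun x hx => (le_total x z).elim (eq_of_le x hx z hz)
    fun hzx => (eq_of_le z hz x hx hzx).symm⟩

lemma isStep_of_eq_const {c : ℝ} (h : ∀ x ∈ Ioo a b, u x = c) : IsStep a b u :=
  ⟨∅, c, 0, by simp, by simpa using h⟩

lemma isStep_const (a b c : ℝ) : IsStep a b fun _ => c := isStep_of_eq_const fun _ _ => rfl

lemma IsStep.extend (h : IsStep a p u) (hp : p ∈ Ioo a b) (hu : ∀ x ∈ Ico p b, u x = u p) :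
    IsStep a b u := by
  obtain ⟨s, c, J, hs, h⟩ := h
  have sum_of_le {x} (hx : p ≤ x) : ∑ z ∈ s, (if z ≤ x then J z else 0) = ∑ z ∈ s, J z :=
    Finset.sum_congr rfl fun z hz => if_pos ((hs z hz).1.2.le.trans hx)
  have hs' : ∀ z ∈ s, z ∈ Ioo a b ∧ J z ≠ 0 := fun z hz =>
    ⟨⟨(hs z hz).1.1, (hs z hz).1.2.trans hp.2⟩, (hs z hz).2⟩
  by_cases hc : u p = c + ∑ z ∈ s, J z
  · refine ⟨s, c, J, hs', fun x hx => ?_⟩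
    rcases lt_or_ge x p with hxp | hxp
    · exact h x ⟨hx.1, hxp⟩
    · rw [hu x ⟨hxp, hx.2⟩, sum_of_le hxp, hc]
  have hps : p ∉ s := fun hps => (hs p hps).1.2.false
  obtain ⟨d, hd⟩ : ∃ d, d = u p - (c + ∑ z ∈ s, J z) := ⟨_, rfl⟩
  have update_eq : ∀ z ∈ s, Function.update J p d z = J z := fun z hz =>
    Function.update_of_ne (ne_of_mem_of_not_mem hz hps) _ _
  refine ⟨insert p s, c, Function.update J p d, fun z hz => ?_, fun x hx => ?_⟩
  · rcases Finset.mem_insert.1 hz with rfl | hz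
    · exact ⟨hp, by rwa [Function.update_self, hd, sub_ne_zero]⟩
    · rw [update_eq z hz]; exact hs' z hz
  · have sum_eq : ∑ z ∈ s, (if z ≤ x then Function.update J p d z else 0)
        = ∑ z ∈ s, if z ≤ x then J z else 0 :=
      Finset.sum_congr rfl fun z hz => by rw [update_eq z hz]
    rw [Finset.sum_insert hps, sum_eq]
    rcases lt_or_ge x p with hxp | hxp
    · rw [if_neg hxp.not_ge, zero_add, h x ⟨hx.1, hxp⟩]
    · rw [if_pos hxp, sum_of_le hxp, Function.update_self, hu x ⟨hxp, hx.2⟩, hd]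
      ring

lemma ConstBetween.isStep (h : ConstBetween s a b u) (hs : s.Finite) : IsStep a b u := by
  lift s to Finset ℝ using hs
  induction s using Finset.induction_on_max generalizing b with
  | empty =>
    obtain ⟨c, hc⟩ := h.exists_eq_const le_rfl le_rfl (by simp)
    exact isStep_of_eq_const hc
  | insert p s hsp ih =>
    rw [Finset.coe_insert] at h
    by_cases hp : p ∈ Ioo a b
    · refine (ih (h.mono ?_ le_rfl hp.2.le)).extend hp fun x hx =>
        (h hp.1 hx.1 hx.2 ?_).symm
      · rintro x hx (rfl | hxs)
        exacts [(hx.2.false).elim, hxs]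
      · refine disjoint_left.2 ?_
        rintro z hz (rfl | hzs)
        exacts [hz.1.false, (hz.1.trans (hsp z hzs)).false]
    · refine ih (h.mono ?_ le_rfl le_rfl)
      rintro x hx (rfl | hxs)
      exacts [(hp hx).elim, hxs]

lemma IsStep.exists_constBetween (h : IsStep a b u) : ∃ s : Set ℝ, s.Finite ∧
    ConstBetween s a b u := by
  obtain ⟨s, c, J, -, h⟩ := h
  refine ⟨s, s.finite_toSet, fun x y hx hxy hy hs => ?_⟩
  rw [h x ⟨hx, hxy.trans_lt hy⟩, h y ⟨hx.trans_le hxy, hy⟩]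
  congr! 3 with z hz
  exact ⟨fun hzx => hzx.trans hxy, fun hzy => not_lt.1 fun hxz =>
    disjoint_left.1 hs ⟨hxz, hzy⟩ hz⟩

lemma IsStep.mono (h : IsStep a b u) (ha : a ≤ p) (hb : q ≤ b) : IsStep p q u := by
  obtain ⟨s, hs, h⟩ := h.exists_constBetween
  exact (h.mono (fun _ _ => id) ha hb).isStep hs

lemma IsStep.piecewise_Ico (hw : IsStep a b w) (hv : IsStep a b v) (p q : ℝ) :
    IsStep a b ((Ico p q).piecewise w v) := by
  obtain ⟨s, hs, hw⟩ := hw.exists_constBetween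
  obtain ⟨t, ht, hv⟩ := hv.exists_constBetween
  refine ConstBetween.isStep (s := s ∪ t ∪ {p, q}) (fun x y hx hxy hy hst => ?_)
    ((hs.union ht).union (by simp))
  simp only [disjoint_union_right, disjoint_insert_right, disjoint_singleton_right, mem_Ioc,
    not_and, not_le] at hst
  obtain ⟨⟨hs, ht⟩, hp, hq⟩ := hst
  have mem_iff : x ∈ Ico p q ↔ y ∈ Ico p q := by
    simp only [mem_Ico]
    exact ⟨fun h => ⟨h.1.trans hxy, hq h.2⟩,
      fun h => ⟨not_lt.1 fun hxp => (hp hxp).not_ge h.1, hxy.trans_lt h.2⟩⟩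
  by_cases hmem : x ∈ Ico p q
  · rw [piecewise_eq_of_mem _ _ _ hmem, piecewise_eq_of_mem _ _ _ (mem_iff.1 hmem),
      hw hx hxy hy hs]
  · rw [piecewise_eq_of_notMem _ _ _ hmem, piecewise_eq_of_notMem _ _ _ (mem_iff.not.1 hmem),
      hv hx hxy hy ht]

/-! ### One-sided limits and jumps -/

lemma exists_Ioo_disjoint_diff_singleton (hs : s.Finite) (x : ℝ) :
    ∃ l r, x ∈ Ioo l r ∧ Disjoint (Ioo l r) (s \ {x}) := by
  have hmem : (s \ {x})ᶜ ∈ 𝓝 x := hs.sdiff.isClosed.compl_mem_nhds (by simp)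
  obtain ⟨l, r, hx, hlr⟩ := mem_nhds_iff_exists_Ioo_subset.1 hmem
  exact ⟨l, r, hx, subset_compl_iff_disjoint_right.1 hlr⟩

lemma leftLim_eq_of_eventually_eq {c : ℝ} (h : ∀ᶠ x in 𝓝[<] p, u x = c) : leftLim u p = c :=
  leftLim_eq_of_tendsto (tendsto_nhds_of_eventually_eq h)

lemma rightLim_eq_of_eventually_eq {c : ℝ} (h : ∀ᶠ x in 𝓝[>] p, u x = c) : rightLim u p = c :=
  rightLim_eq_of_tendsto (tendsto_nhds_of_eventually_eq h)

lemma IsStep.eventually_eq_leftLim (h : IsStep a b u) (hp : p ∈ Ioc a b) :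
    ∀ᶠ x in 𝓝[<] p, u x = leftLim u p := by
  obtain ⟨s, hs, h⟩ := h.exists_constBetween
  obtain ⟨l, r, hlr, hdisj⟩ := exists_Ioo_disjoint_diff_singleton hs p
  obtain ⟨c, hc⟩ := h.exists_eq_const (le_max_left a l) hp.2 <| disjoint_left.2 fun x hx hxs =>
    disjoint_left.1 hdisj ⟨(le_max_right a l).trans_lt hx.1, hx.2.trans hlr.2⟩ ⟨hxs, hx.2.ne⟩
  have ev : ∀ᶠ x in 𝓝[<] p, u x = c :=
    mem_of_superset (Ioo_mem_nhdsLT (max_lt hp.1 hlr.1)) hc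
  rwa [leftLim_eq_of_eventually_eq ev]

lemma IsStep.eventually_eq_rightLim (h : IsStep a b u) (hp : p ∈ Ico a b) :
    ∀ᶠ x in 𝓝[>] p, u x = rightLim u p := by
  obtain ⟨s, hs, h⟩ := h.exists_constBetween
  obtain ⟨l, r, hlr, hdisj⟩ := exists_Ioo_disjoint_diff_singleton hs p
  obtain ⟨c, hc⟩ := h.exists_eq_const hp.1 (min_le_left b r) <| disjoint_left.2 fun x hx hxs =>
    disjoint_left.1 hdisj ⟨hlr.1.trans hx.1, hx.2.trans_le (min_le_right b r)⟩ ⟨hxs, hx.1.ne'⟩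
  have ev : ∀ᶠ x in 𝓝[>] p, u x = c :=
    mem_of_superset (Ioo_mem_nhdsGT (lt_min hp.2 hlr.2)) hc
  rwa [rightLim_eq_of_eventually_eq ev]

lemma ConstBetween.jumpSet_subset (h : ConstBetween s a b u) (hs : s.Finite) :
    jumpSet a b u ⊆ s := by
  rintro x ⟨hx, hjump⟩
  by_contra hxs
  obtain ⟨l, r, hlr, hdisj⟩ := exists_Ioo_disjoint_diff_singleton hs x
  rw [sdiff_singleton_eq_self hxs] at hdisj
  obtain ⟨c, hc⟩ := h.exists_eq_const (le_max_left a l) (min_le_left b r) <|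
    hdisj.mono_left (Ioo_subset_Ioo (le_max_right a l) (min_le_right b r))
  have hmem : x ∈ Ioo (max a l) (min b r) := ⟨max_lt hx.1 hlr.1, lt_min hx.2 hlr.2⟩
  have heq : ∀ᶠ y in 𝓝 x, u y = c := mem_of_superset (Ioo_mem_nhds hmem.1 hmem.2) hc
  exact hjump (continuousAt_const.congr (heq.mono fun _ => Eq.symm))

lemma IsStep.finite_jumpSet (h : IsStep a b u) : (jumpSet a b u).Finite := by
  obtain ⟨s, hs, h⟩ := h.exists_constBetween
  exact hs.subset (h.jumpSet_subset hs)

lemma IsStep.eventually_nhdsGE_eq (h : IsStep a b u) (hp : p ∈ Ioo a b) :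
    ∀ᶠ x in 𝓝[≥] p, u x = u p := by
  obtain ⟨s, hs, h⟩ := h.exists_constBetween
  obtain ⟨l, r, hlr, hdisj⟩ := exists_Ioo_disjoint_diff_singleton hs p
  filter_upwards [Ico_mem_nhdsGE (lt_min hp.2 hlr.2)] with x hx
  refine (h hp.1 hx.1 (hx.2.trans_le (min_le_left b r)) <| disjoint_left.2 fun y hy hys => ?_).symm
  exact disjoint_left.1 hdisj ⟨hlr.1.trans hy.1, hy.2.trans_lt (hx.2.trans_le (min_le_right b r))⟩
    ⟨hys, hy.1.ne'⟩

lemma IsStep.constBetween_jumpSet (h : IsStep a b u) : ConstBetween (jumpSet a b u) a b u := by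
  intro x y hx hxy hy hdisj
  have mem_Ioo : ∀ z ∈ Icc x y, z ∈ Ioo a b := fun z hz =>
    ⟨hx.trans_le hz.1, hz.2.trans_lt hy⟩
  have hderiv : ∀ z ∈ Icc x y, HasDerivWithinAt u 0 (Ici z) z := fun z hz =>
    (hasDerivWithinAt_const z (Ici z) (u z)).congr_of_eventuallyEq
      (h.eventually_nhdsGE_eq (mem_Ioo z hz)) rfl
  have hcont : ContinuousOn u (Icc x y) := by
    intro z hz
    rcases hz.1.eq_or_lt with rfl | hxz
    · exact (hderiv x hz).continuousWithinAt.mono Icc_subset_Ici_self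
    · by_contra hjump
      exact disjoint_left.1 hdisj ⟨hxz, hz.2⟩
        ⟨mem_Ioo z hz, fun hc => hjump hc.continuousWithinAt⟩
  exact (constant_of_has_deriv_right_zero hcont (fun z hz => hderiv z ⟨hz.1, hz.2.le⟩) y
    ⟨hxy, le_rfl⟩).symm

lemma IsStep.exists_eq_const_of_continuousAt (h : IsStep a b u)
    (hc : ∀ x ∈ Ioo a b, ContinuousAt u x) : ∃ c, ∀ x ∈ Ioo a b, u x = c :=
  h.constBetween_jumpSet.exists_eq_const le_rfl le_rfl <|
    disjoint_left.2 fun x hx hjump => hjump.2 (hc x hx)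

lemma IsStep.eq_left_of_continuousAt (h : IsStep a b u) (hp : p ∈ Ioo a b)
    (hc : ∀ x ∈ Ioo p b, ContinuousAt u x) : ∀ x ∈ Ico p b, u x = u p := fun _ hx =>
  (h.constBetween_jumpSet hp.1 hx.1 hx.2 <| disjoint_left.2 fun z hz hjump =>
    hjump.2 (hc z ⟨hz.1, hz.2.trans_lt hx.2⟩)).symm

lemma IsStep.exists_last_jump (h : IsStep a b u) (hne : (jumpSet a b u).Nonempty) :
    ∃ p ∈ jumpSet a b u, ∀ x ∈ Ioo p b, ContinuousAt u x := by
  obtain ⟨p, hp, hmax⟩ := exists_max_image _ id h.finite_jumpSet hne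
  refine ⟨p, hp, fun x hx => not_not.1 fun hjump => ?_⟩
  exact (hmax x ⟨⟨hp.1.1.trans hx.1, hx.2⟩, hjump⟩).not_gt hx.1

lemma IsStep.exists_first_jump (h : IsStep a b u) (hne : (jumpSet a b u).Nonempty) :
    ∃ p ∈ jumpSet a b u, ∀ x ∈ Ioo a p, ContinuousAt u x := by
  obtain ⟨p, hp, hmin⟩ := exists_min_image _ id h.finite_jumpSet hne
  refine ⟨p, hp, fun x hx => not_not.1 fun hjump => ?_⟩
  exact (hmin x ⟨⟨hx.1, hx.2.trans hp.1.2⟩, hjump⟩).not_gt hx.2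

lemma IsStep.induction {P : ℝ → Prop} (h : IsStep a b u) (hab : a < b)
    (const : ∀ b c, a < b → (∀ x ∈ Ioo a b, u x = c) → P b)
    (jump : ∀ p b, p ∈ Ioo a b → IsStep a b u → ¬ ContinuousAt u p →
      (∀ x ∈ Ico p b, u x = u p) → P p → P b) : P b := by
  induction hn : (jumpSet a b u).ncard using Nat.strong_induction_on generalizing b with
  | _ n ih =>
  subst hn
  rcases (jumpSet a b u).eq_empty_or_nonempty with hempty | hne
  · obtain ⟨c, hc⟩ := h.constBetween_jumpSet.exists_eq_const le_rfl le_rfl (by simp [hempty])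
    exact const b c hab hc
  · obtain ⟨p, hp, hlast⟩ := h.exists_last_jump hne
    have hfewer : (jumpSet a p u).ncard < (jumpSet a b u).ncard := by
      refine ncard_lt_ncard ⟨fun x hx => ⟨⟨hx.1.1, hx.1.2.trans hp.1.2⟩, hx.2⟩, fun hsub => ?_⟩
        h.finite_jumpSet
      exact (hsub hp).1.2.false
    exact jump p b hp.1 h hp.2 (h.eq_left_of_continuousAt hp.1 hlast)
      (ih _ hfewer (h.mono le_rfl hp.1.2.le) hp.1.1 rfl)

/-! ### The jump functional -/

variable {α β : ℝ}

lemma IsStep.memLp (h : IsStep a b u) (r : ENNReal) : MemLp u r (volume.restrict (Ioo a b)) := by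
  obtain ⟨s, c, J, -, h⟩ := h
  have hsum : MemLp (fun x => c + ∑ p ∈ s, (Ici p).indicator (fun _ => J p) x) r
      (volume.restrict (Ioo a b)) :=
    (memLp_const c).add <| memLp_finsetSum s fun p _ =>
      (memLp_const (J p)).indicator measurableSet_Ici
  refine (memLp_congr_ae ?_).2 hsum
  exact ae_restrict_of_forall_mem measurableSet_Ioo fun x hx => by simp [h x hx, indicator_apply]

lemma IsStep.integrableOn_sq_sub (h : IsStep a b u) (hf : MemLp f 2 (volume.restrict (Ioo a b))) :
    IntegrableOn (fun x => (u x - f x) ^ 2) (Ioo a b) :=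
  ((h.memLp 2).sub hf).integrable_sq

lemma JF_congr (h : ∀ x ∈ Ioo a b, u x = v x) : JF α β f a b u = JF α β f a b v := by
  have hjump : jumpSet a b u = jumpSet a b v := by
    ext x
    refine and_congr_right fun hx => not_congr (continuousAt_congr ?_)
    exact mem_of_superset (Ioo_mem_nhds hx.1 hx.2) h
  rw [JF, JF, hjump, setIntegral_congr_fun measurableSet_Ioo fun x hx => by rw [h x hx]]

lemma JF_of_eq_const {c : ℝ} (h : ∀ x ∈ Ioo a b, u x = c) :
    JF α β f a b u = β * ∫ x in Ioo a b, (c - f x) ^ 2 := by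
  have hjump : jumpSet a b (fun _ => c) = ∅ := by simp [jumpSet, continuousAt_const]
  rw [JF_congr h, JF, hjump]
  simp

lemma JF_neg (α β : ℝ) (f : ℝ → ℝ) (a b : ℝ) (u : ℝ → ℝ) :
    JF (-α) (-β) f a b u = -JF α β f a b u := by
  rw [JF, JF]
  ring

lemma mul_ncard_le_JF (hβ : 0 ≤ β) : α * (jumpSet a b u).ncard ≤ JF α β f a b u :=
  le_add_of_nonneg_right <|
    mul_nonneg hβ <| setIntegral_nonneg measurableSet_Ioo fun _ _ => sq_nonneg _

lemma JF_nonneg (hα : 0 ≤ α) (hβ : 0 ≤ β) : 0 ≤ JF α β f a b u :=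
  (by positivity : 0 ≤ α * (jumpSet a b u).ncard).trans (mul_ncard_le_JF hβ)

/-- The price that `JF` charges for the point `p`, when a domain of `u` is cut there: `α` if `p` is
a jump point of `u`, and `0` otherwise. -/
noncomputable def jumpCost (α : ℝ) (u : ℝ → ℝ) (p : ℝ) : ℝ :=
  {x | ¬ ContinuousAt u x}.indicator (fun _ => α) p

lemma jumpCost_nonneg (hα : 0 ≤ α) (u : ℝ → ℝ) (p : ℝ) : 0 ≤ jumpCost α u p :=
  indicator_nonneg (fun _ _ => hα) p

lemma jumpCost_le (hα : 0 ≤ α) (u : ℝ → ℝ) (p : ℝ) : jumpCost α u p ≤ α :=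
  indicator_le_self' (fun _ _ => hα) p

lemma jumpCost_of_not_continuousAt (h : ¬ ContinuousAt u p) : jumpCost α u p = α :=
  indicator_of_mem (s := {x | ¬ ContinuousAt u x}) h _

lemma jumpSet_union (hp : p ∈ Ioo a b) :
    jumpSet a p u ∪ jumpSet p b u = jumpSet a b u \ {p} := by
  ext x
  simp only [jumpSet, mem_union, Set.mem_sdiff, mem_singleton_iff, mem_ofPred_eq, mem_Ioo]
  constructor
  · rintro (⟨⟨h₁, h₂⟩, h₃⟩ | ⟨⟨h₁, h₂⟩, h₃⟩)
    exacts [⟨⟨⟨h₁, h₂.trans hp.2⟩, h₃⟩, h₂.ne⟩, ⟨⟨⟨hp.1.trans h₁, h₂⟩, h₃⟩, h₁.ne'⟩]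
  · rintro ⟨⟨⟨h₁, h₂⟩, h₃⟩, hne⟩
    exact (lt_or_gt_of_ne hne).imp (fun h => ⟨⟨h₁, h⟩, h₃⟩) fun h => ⟨⟨h, h₂⟩, h₃⟩

lemma IsStep.mul_ncard_jumpSet (h : IsStep a b u) (hp : p ∈ Ioo a b) (α : ℝ) :
    α * (jumpSet a b u).ncard
      = α * (jumpSet a p u).ncard + α * (jumpSet p b u).ncard + jumpCost α u p := by
  have hdisj : Disjoint (jumpSet a p u) (jumpSet p b u) :=
    disjoint_left.2 fun x hx hx' => (hx.1.2.trans hx'.1.1).false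
  have hcard := ncard_union_eq hdisj (h.mono le_rfl hp.2.le).finite_jumpSet
    (h.mono hp.1.le le_rfl).finite_jumpSet
  rw [jumpSet_union hp] at hcard
  rw [← mul_add, ← Nat.cast_add, ← hcard]
  by_cases hc : ContinuousAt u p
  · have hnot : p ∉ jumpSet a b u := fun hmem => hmem.2 hc
    simp [jumpCost, hc, sdiff_singleton_eq_self hnot]
  · rw [jumpCost_of_not_continuousAt hc,
      ← ncard_sdiff_singleton_add_one
        (show p ∈ jumpSet a b u from ⟨hp, hc⟩) h.finite_jumpSet]
    push_cast
    ring

lemma JF_split (h : IsStep a b u) (hf : MemLp f 2 (volume.restrict (Ioo a b)))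
    (hp : p ∈ Ioo a b) :
    JF α β f a b u = JF α β f a p u + JF α β f p b u + jumpCost α u p := by
  have hint := h.integrableOn_sq_sub hf
  have hunion : Ioo a b =ᵐ[volume] (Ioo a p ∪ Ioo p b : Set ℝ) := by
    rw [← Ioo_union_Ico_eq_Ioo hp.1 hp.2.le]
    exact (ae_eq_refl _).union Ioo_ae_eq_Ico.symm
  have hdisj : Disjoint (Ioo a p) (Ioo p b) :=
    disjoint_left.2 fun x hx hx' => (hx.2.trans hx'.1).false
  have hadd := setIntegral_union hdisj measurableSet_Ioo
    (hint.mono_set (Ioo_subset_Ioo_right hp.2.le)) (hint.mono_set (Ioo_subset_Ioo_left hp.1.le))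
  rw [← setIntegral_congr_set hunion] at hadd
  rw [JF, JF, JF, h.mul_ncard_jumpSet hp, hadd]
  ring

/-! ### Comparison with pasted competitors -/

lemma SameBdry.of_eventuallyEq (ha : u =ᶠ[𝓝[>] a] v) (hb : u =ᶠ[𝓝[<] b] v) :
    SameBdry a b u v :=
  ⟨fun _ h => h.congr' ha.symm, fun _ h => h.congr' hb.symm⟩

lemma IsEntireLocalMinJF.isStep (hv : IsEntireLocalMinJF α β f v) (a b : ℝ) : IsStep a b v :=
  (hv a (max b (a + 1)) (lt_max_of_lt_right (lt_add_one a))).1.mono le_rfl (le_max_left b _)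

section Comparison

variable (hv : IsEntireLocalMinJF α β f v) (hf : ∀ a b, MemLp f 2 (volume.restrict (Ioo a b)))
  (hw : ∀ a b, IsStep a b w)
include hv hf hw

lemma IsEntireLocalMinJF.JF_add_jumpCost_le (hpq : p < q) :
    JF α β f p q v + jumpCost α v p + jumpCost α v q
      ≤ JF α β f p q w + jumpCost α ((Ico p q).piecewise w v) p
        + jumpCost α ((Ico p q).piecewise w v) q := by
  set z := (Ico p q).piecewise w v
  have hvs := hv.isStep
  have hzs : ∀ a b, IsStep a b z := fun a b => (hw a b).piecewise_Ico (hvs a b) p q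
  have z_left : ∀ x ∈ Ioo (p - 1) p, z x = v x := fun x hx =>
    piecewise_eq_of_notMem _ _ _ fun h => (h.1.trans_lt hx.2).false
  have z_mid : ∀ x ∈ Ioo p q, z x = w x := fun x hx => piecewise_eq_of_mem _ _ _ ⟨hx.1.le, hx.2⟩
  have z_right : ∀ x ∈ Ioo q (q + 1), z x = v x := fun x hx =>
    piecewise_eq_of_notMem _ _ _ fun h => (h.2.trans hx.1).false
  have hbdry : SameBdry (p - 1) (q + 1) z v := .of_eventuallyEq
    (mem_of_superset (Ioo_mem_nhdsGT (sub_one_lt p)) z_left)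
    (mem_of_superset (Ioo_mem_nhdsLT (lt_add_one q)) z_right)
  have hp : p ∈ Ioo (p - 1) (q + 1) := ⟨sub_one_lt p, hpq.trans (lt_add_one q)⟩
  have hq : q ∈ Ioo p (q + 1) := ⟨hpq, lt_add_one q⟩
  have hmin := (hv (p - 1) (q + 1) (hp.1.trans hp.2)).2 z (hzs _ _) hbdry
  rw [JF_split (hvs _ _) (hf _ _) hp, JF_split (hvs _ _) (hf _ _) hq,
    JF_split (hzs _ _) (hf _ _) hp, JF_split (hzs _ _) (hf _ _) hq,
    JF_congr z_left, JF_congr z_mid, JF_congr z_right] at hmin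
  linarith

lemma IsEntireLocalMinJF.JF_le_add_two_mul (hα : 0 ≤ α) (hpq : p < q) :
    JF α β f p q v ≤ JF α β f p q w + 2 * α := by
  have hle := hv.JF_add_jumpCost_le hf hw hpq
  have hp := jumpCost_le hα ((Ico p q).piecewise w v) p
  have hq := jumpCost_le hα ((Ico p q).piecewise w v) q
  linarith [jumpCost_nonneg hα v p, jumpCost_nonneg hα v q]

lemma IsEntireLocalMinJF.JF_le_of_jump (hα : 0 ≤ α) (hpq : p < q) (hp : ¬ ContinuousAt v p)
    (hq : ¬ ContinuousAt v q) : JF α β f p q v ≤ JF α β f p q w := by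
  have hle := hv.JF_add_jumpCost_le hf hw hpq
  rw [jumpCost_of_not_continuousAt hp, jumpCost_of_not_continuousAt hq] at hle
  have hp := jumpCost_le hα ((Ico p q).piecewise w v) p
  have hq := jumpCost_le hα ((Ico p q).piecewise w v) q
  linarith

end Comparison

/-! ### Calibrations -/

section Calibration

variable {Φ : ℝ → ℝ → ℝ} (hf : ∀ a b, MemLp f 2 (volume.restrict (Ioo a b)))
include hf

lemma IsStep.sub_le_JF (h : IsStep a b u) (hab : a < b)
    (hflat : ∀ p q c, p < q → (∀ x ∈ Ioo p q, u x = c) →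
      Φ q c - Φ p c ≤ β * ∫ x in Ioo p q, (c - f x) ^ 2)
    (hjump : ∀ p, ¬ ContinuousAt u p → Φ p (u p) - Φ p (leftLim u p) ≤ α) :
    Φ b (leftLim u b) - Φ a (rightLim u a) ≤ JF α β f a b u := by
  refine h.induction (P := fun b => Φ b (leftLim u b) - Φ a (rightLim u a) ≤ JF α β f a b u) hab
    (fun b c hab hc => ?_) fun p b hp h hjp hc ih => ?_
  · rw [leftLim_eq_of_eventually_eq (mem_of_superset (Ioo_mem_nhdsLT hab) hc),
      rightLim_eq_of_eventually_eq (mem_of_superset (Ioo_mem_nhdsGT hab) hc), JF_of_eq_const hc]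
    exact hflat a b c hab hc
  · have hc' : ∀ x ∈ Ioo p b, u x = u p := fun x hx => hc x ⟨hx.1.le, hx.2⟩
    rw [JF_split h (hf a b) hp, JF_of_eq_const hc', jumpCost_of_not_continuousAt hjp,
      leftLim_eq_of_eventually_eq (mem_of_superset (Ioo_mem_nhdsLT hp.2) hc')]
    linarith [hflat p b (u p) hp.2 hc', hjump p hjp]

/-- `Φ` increases along a step function at most as fast as the functional,
and exactly as fast along `v`, so that the boundary values alone bound the energy from below. -/
theorem isEntireLocalMinJF_of_calibration (hv : ∀ a b, IsStep a b v)
    (hflat : ∀ p q c, p < q → Φ q c - Φ p c ≤ β * ∫ x in Ioo p q, (c - f x) ^ 2)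
    (hjump : ∀ p c c', Φ p c' - Φ p c ≤ α)
    (hflat_v : ∀ p q c, p < q → (∀ x ∈ Ioo p q, v x = c) →
      β * ∫ x in Ioo p q, (c - f x) ^ 2 ≤ Φ q c - Φ p c)
    (hjump_v : ∀ p, ¬ ContinuousAt v p → α ≤ Φ p (v p) - Φ p (leftLim v p)) :
    IsEntireLocalMinJF α β f v := by
  refine fun a b hab => ⟨hv a b, fun u hu hbdry => ?_⟩
  have hright : rightLim u a = rightLim v a := rightLim_eq_of_tendsto <|
    hbdry.1 _ (tendsto_nhds_of_eventually_eq ((hv a b).eventually_eq_rightLim ⟨le_rfl, hab⟩))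
  have hleft : leftLim u b = leftLim v b := leftLim_eq_of_tendsto <|
    hbdry.2 _ (tendsto_nhds_of_eventually_eq ((hv a b).eventually_eq_leftLim ⟨hab, le_rfl⟩))
  have hlower := hu.sub_le_JF hf hab (fun p q c hpq _ => hflat p q c hpq)
    fun p _ => hjump p _ _
  rw [hright, hleft] at hlower
  -- the upper bound for `v` is the lower bound for the opposite functional
  have hupper := (hv a b).sub_le_JF (α := -α) (β := -β) (Φ := fun x c => -Φ x c) hf hab
    (fun p q c hpq hc => by linarith [hflat_v p q c hpq hc])
    fun p hp => by linarith [hjump_v p hp]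
  rw [JF_neg] at hupper
  linarith

end Calibration

/-! ### Affine forcing terms -/

variable {M H : ℝ}

lemma memLp_affine (M a b : ℝ) : MemLp (fun x => M * x) 2 (volume.restrict (Ioo a b)) := by
  have hcont : Continuous fun x : ℝ => M * x := by fun_prop
  refine (memLp_two_iff_integrable_sq hcont.aestronglyMeasurable).2 ?_
  exact ((hcont.pow 2).integrableOn_Icc (a := a) (b := b)).mono_set Ioo_subset_Icc_self

lemma integral_Ioo_sq_sub_affine (M c : ℝ) (hab : a ≤ b) :
    ∫ x in Ioo a b, (c - M * x) ^ 2
      = (b - a) * (c - M * ((a + b) / 2)) ^ 2 + M ^ 2 * (b - a) ^ 3 / 12 := by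
  have hderiv : ∀ x ∈ uIcc a b,
      HasDerivAt (fun x => c ^ 2 * x - c * M * x ^ 2 + M ^ 2 * x ^ 3 / 3) ((c - M * x) ^ 2) x := by
    intro x _
    refine ((((hasDerivAt_id x).const_mul (c ^ 2)).sub ((hasDerivAt_pow 2 x).const_mul (c * M))).add
      (((hasDerivAt_pow 3 x).const_mul (M ^ 2)).div_const 3)).congr_deriv ?_
    ring
  rw [← integral_Ioc_eq_integral_Ioo, ← intervalIntegral.integral_of_le hab,
    intervalIntegral.integral_eq_sub_of_hasDerivAt hderiv (Continuous.intervalIntegrable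
      (by fun_prop) _ _)]
  ring

/-! ### Calibrating staircases -/

/-- The primitive of `s ↦ s² - H²` on `[-H, H]`, extended by constants. With `s` the signed
horizontal distance from the graph of the forcing term, this is the function which calibrates
staircases of step length `2H`. -/
noncomputable def potential (H s : ℝ) : ℝ :=
  (max (-H) (min H s)) ^ 3 / 3 - H ^ 2 * max (-H) (min H s)

lemma potential_of_abs_le {y : ℝ} (h : |y| ≤ H) : potential H y = y ^ 3 / 3 - H ^ 2 * y := by
  rw [potential, min_eq_right (abs_le.1 h).2, max_eq_right (abs_le.1 h).1]

lemma abs_potential_le (hH : 0 ≤ H) (y : ℝ) : |potential H y| ≤ 2 / 3 * H ^ 3 := by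
  have lower : -H ≤ max (-H) (min H y) := le_max_left _ _
  have upper : max (-H) (min H y) ≤ H := max_le (by linarith) (min_le_left _ _)
  rw [potential, abs_le]
  constructor
  · nlinarith [mul_nonneg (sq_nonneg (max (-H) (min H y) - H))
      (show 0 ≤ max (-H) (min H y) + 2 * H by linarith)]
  · nlinarith [mul_nonneg (sq_nonneg (max (-H) (min H y) + H))
      (show 0 ≤ 2 * H - max (-H) (min H y) by linarith)]

lemma cubic_sub_potential (hH : 0 ≤ H) (y : ℝ) :
    y ^ 3 / 3 - H ^ 2 * y - potential H y
      = (max (y - H) 0) ^ 2 * (max (y - H) 0 + 3 * H) / 3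
        - (max (-H - y) 0) ^ 2 * (max (-H - y) 0 + 3 * H) / 3 := by
  rw [potential]
  rcases le_total y (-H) with hy | hy
  · rw [min_eq_right (by linarith), max_eq_left hy, max_eq_right (by linarith),
      max_eq_left (by linarith)]
    ring
  rcases le_total y H with hy' | hy'
  · rw [min_eq_right hy', max_eq_right hy, max_eq_right (by linarith), max_eq_right (by linarith)]
    ring
  · rw [min_eq_left hy', max_eq_right (by linarith), max_eq_left (by linarith),
      max_eq_right (by linarith)]
    ring

lemma monotone_cubic_sub_potential (hH : 0 ≤ H) :
    Monotone fun y => y ^ 3 / 3 - H ^ 2 * y - potential H y := by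
  intro y z hyz
  simp only [cubic_sub_potential hH]
  have := le_max_right (y - H) 0
  have := le_max_right (-H - z) 0
  gcongr

/-- The calibration for the forcing term `x ↦ M * x` and staircases of step length `2 * H`, as a
function of the position `x` and of the value `c` of the step function. -/
noncomputable def affineCalibration (β M H x c : ℝ) : ℝ :=
  β * M ^ 2 * (H ^ 2 * x + potential H (x - c / M))

lemma affineCalibration_sub_le (hβ : 0 ≤ β) (hM : M ≠ 0) (hH : 0 ≤ H) (c : ℝ) (hpq : p ≤ q) :
    affineCalibration β M H q c - affineCalibration β M H p c
      ≤ β * ∫ x in Ioo p q, (c - M * x) ^ 2 := by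
  obtain ⟨y, rfl⟩ : ∃ y, c = M * y := ⟨c / M, by field_simp⟩
  rw [integral_Ioo_sq_sub_affine M _ hpq, affineCalibration, affineCalibration,
    mul_div_cancel_left₀ y hM]
  have hmono := monotone_cubic_sub_potential hH (sub_le_sub_right hpq y)
  have hscaled := mul_le_mul_of_nonneg_left hmono (show 0 ≤ β * M ^ 2 by positivity)
  linarith

lemma affineCalibration_sub_eq (hM : M ≠ 0) {c : ℝ} (hpq : p ≤ q) (hp : |p - c / M| ≤ H)
    (hq : |q - c / M| ≤ H) :
    affineCalibration β M H q c - affineCalibration β M H p c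
      = β * ∫ x in Ioo p q, (c - M * x) ^ 2 := by
  rw [integral_Ioo_sq_sub_affine M _ hpq, affineCalibration, affineCalibration,
    potential_of_abs_le hp, potential_of_abs_le hq]
  field_simp
  ring

lemma affineCalibration_jump_le (hβ : 0 ≤ β) (hH : 0 ≤ H) (x c c' : ℝ) :
    affineCalibration β M H x c' - affineCalibration β M H x c
      ≤ 4 / 3 * (β * M ^ 2) * H ^ 3 := by
  have hc := (abs_le.1 (abs_potential_le hH (x - c / M))).1
  have hc' := (abs_le.1 (abs_potential_le hH (x - c' / M))).2
  have hosc : potential H (x - c' / M) - potential H (x - c / M) ≤ 4 / 3 * H ^ 3 := by linarith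
  have hscaled := mul_le_mul_of_nonneg_left hosc (show 0 ≤ β * M ^ 2 by positivity)
  rw [affineCalibration, affineCalibration]
  linarith

/-! ### Staircases -/

/-- The staircase with jump points `p + l * k`, `k : ℤ`, whose value on each step is that of
`x ↦ M * x` at the midpoint. -/
noncomputable def stair (M p l x : ℝ) : ℝ := M * (p + l * (⌊(x - p) / l⌋ + 1 / 2))

section Stair

variable {l x : ℝ} (hl : 0 < l)
include hl

lemma stair_of_mem_Ico {k : ℤ} (hx : x ∈ Ico (p + l * k) (p + l * (k + 1))) :
    stair M p l x = M * (p + l * (k + 1 / 2)) := by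
  have hfloor : ⌊(x - p) / l⌋ = k := by
    rw [Int.floor_eq_iff, le_div_iff₀ hl, div_lt_iff₀ hl]
    constructor <;> linarith [hx.1, hx.2]
  rw [stair, hfloor]

lemma exists_mem_Ico_lattice (p x : ℝ) : ∃ k : ℤ, x ∈ Ico (p + l * k) (p + l * (k + 1)) := by
  have h₁ := Int.floor_le ((x - p) / l)
  have h₂ := Int.lt_floor_add_one ((x - p) / l)
  rw [le_div_iff₀ hl] at h₁
  rw [div_lt_iff₀ hl] at h₂
  exact ⟨⌊(x - p) / l⌋, by linarith, by linarith⟩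

lemma constBetween_stair (M p a b : ℝ) :
    ConstBetween (range fun k : ℤ => p + l * k) a b (stair M p l) := by
  intro x y _ hxy _ hdisj
  obtain ⟨k, hk⟩ := exists_mem_Ico_lattice hl p y
  have hkx : p + l * k ≤ x := not_lt.1 fun hlt => disjoint_left.1 hdisj ⟨hlt, hk.1⟩ ⟨k, rfl⟩
  rw [stair_of_mem_Ico hl hk, stair_of_mem_Ico hl ⟨hkx, hxy.trans_lt hk.2⟩]

lemma finite_lattice_inter_Ioo (p a b : ℝ) :
    ((range fun k : ℤ => p + l * k) ∩ Ioo a b).Finite := by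
  refine ((finite_Icc ⌊(a - p) / l⌋ ⌈(b - p) / l⌉).image fun k : ℤ => p + l * k).subset ?_
  rintro _ ⟨⟨k, rfl⟩, hk⟩
  refine ⟨k, ⟨?_, ?_⟩, rfl⟩
  · rw [← Int.cast_le (R := ℝ)]
    exact (Int.floor_le _).trans ((div_le_iff₀ hl).2 (by linarith [hk.1]))
  · rw [← Int.cast_le (R := ℝ)]
    exact ((le_div_iff₀ hl).2 (by linarith [hk.2])).trans (Int.le_ceil _)

lemma isStep_stair (M p a b : ℝ) : IsStep a b (stair M p l) :=
  (constBetween_stair hl M p a b).inter_Ioo.isStep (finite_lattice_inter_Ioo hl p a b)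

lemma exists_eq_of_not_continuousAt_stair (hx : ¬ ContinuousAt (stair M p l) x) :
    ∃ k : ℤ, x = p + l * k := by
  have hmem : x ∈ jumpSet (x - 1) (x + 1) (stair M p l) := ⟨⟨sub_one_lt x, lt_add_one x⟩, hx⟩
  obtain ⟨⟨k, hk⟩, -⟩ := (constBetween_stair hl M p _ _).inter_Ioo.jumpSet_subset
    (finite_lattice_inter_Ioo hl p _ _) hmem
  exact ⟨k, hk.symm⟩

lemma stair_apply_lattice (M p : ℝ) (k : ℤ) :
    stair M p l (p + l * k) = M * (p + l * (k + 1 / 2)) :=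
  stair_of_mem_Ico hl ⟨le_rfl, by linarith⟩

lemma leftLim_stair_lattice (M p : ℝ) (k : ℤ) :
    leftLim (stair M p l) (p + l * k) = M * (p + l * (k - 1 / 2)) := by
  refine leftLim_eq_of_eventually_eq ?_
  filter_upwards [Ioo_mem_nhdsLT (show p + l * (k - 1) < p + l * k by linarith)] with x hx
  rw [stair_of_mem_Ico hl (k := k - 1) (by push_cast; exact ⟨hx.1.le, by linarith [hx.2]⟩)]
  push_cast
  ring

lemma not_continuousAt_stair_lattice (hM : M ≠ 0) (p : ℝ) (k : ℤ) :
    ¬ ContinuousAt (stair M p l) (p + l * k) := by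
  intro hc
  have heq := hc.continuousWithinAt.leftLim_eq
  rw [leftLim_stair_lattice hl, stair_apply_lattice hl] at heq
  linarith [mul_left_cancel₀ hM heq]

lemma abs_sub_stair_div_le (hM : M ≠ 0) (p x : ℝ) : |x - stair M p l x / M| ≤ l / 2 := by
  obtain ⟨k, hk⟩ := exists_mem_Ico_lattice hl p x
  rw [stair_of_mem_Ico hl hk, mul_div_cancel_left₀ _ hM, abs_le]
  constructor <;> linarith [hk.1, hk.2]

lemma abs_sub_div_le_of_stair_eq_const (hM : M ≠ 0) {c : ℝ} (hab : a < b)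
    (hc : ∀ x ∈ Ioo a b, stair M p l x = c) : ∀ x ∈ Icc a b, |x - c / M| ≤ l / 2 := by
  rw [← closure_Ioo hab.ne]
  have hclosed : IsClosed {x | |x - c / M| ≤ l / 2} := isClosed_le (by fun_prop) continuous_const
  exact hclosed.closure_subset_iff.2 fun x hx => hc x hx ▸ abs_sub_stair_div_le hl hM p x

lemma JF_stair (α β : ℝ) (hM : M ≠ 0) (p : ℝ) {m : ℕ} (hm : 1 ≤ m) :
    JF α β (fun x => M * x) p (p + l * m) (stair M p l)
      = α * (m - 1) + β * M ^ 2 * l ^ 3 / 12 * m := by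
  have energy_step (k : ℕ) : JF α β (fun x => M * x) (p + l * k) (p + l * (k + 1)) (stair M p l)
      = β * M ^ 2 * l ^ 3 / 12 := by
    have hconst : ∀ x ∈ Ioo (p + l * k) (p + l * (k + 1)),
        stair M p l x = M * (p + l * (k + 1 / 2)) := fun x hx =>
      stair_of_mem_Ico hl (k := k) ⟨hx.1.le, hx.2⟩
    rw [JF_of_eq_const hconst, integral_Ioo_sq_sub_affine _ _ (by linarith)]
    ring
  induction m, hm using Nat.le_induction with
  | base => simpa using energy_step 0
  | succ m hm ih =>
    have hm' : (1 : ℝ) ≤ m := mod_cast hm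
    have hmem : p + l * m ∈ Ioo p (p + l * (m + 1 : ℕ)) :=
      ⟨by linarith [mul_pos hl (one_pos.trans_le hm')], by push_cast; linarith⟩
    have hjump : ¬ ContinuousAt (stair M p l) (p + l * m) :=
      not_continuousAt_stair_lattice hl hM p m
    rw [JF_split (isStep_stair hl M p _ _) (memLp_affine M _ _) hmem, ih, Nat.cast_succ,
      energy_step, jumpCost_of_not_continuousAt hjump]
    ring

end Stair

lemma isEntireLocalMinJF_stair (hβ : 0 ≤ β) (hM : M ≠ 0) (hH : 0 < H)
    (hα : α = 4 / 3 * (β * M ^ 2) * H ^ 3) (p : ℝ) :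
    IsEntireLocalMinJF α β (fun x => M * x) (stair M p (2 * H)) := by
  have hl : 0 < 2 * H := by positivity
  refine isEntireLocalMinJF_of_calibration (Φ := affineCalibration β M H) (memLp_affine M)
    (isStep_stair hl M p) (fun p q c hpq => affineCalibration_sub_le hβ hM hH.le c hpq.le)
    (fun x c c' => hα ▸ affineCalibration_jump_le hβ hH.le x c c') (fun a b c hab hc => ?_)
    fun x hx => ?_
  · have hdist := abs_sub_div_le_of_stair_eq_const hl hM hab hc
    rw [mul_div_cancel_left₀ H two_ne_zero] at hdist
    exact (affineCalibration_sub_eq hM hab.le (hdist a ⟨le_rfl, hab.le⟩)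
      (hdist b ⟨hab.le, le_rfl⟩)).ge
  · obtain ⟨k, rfl⟩ := exists_eq_of_not_continuousAt_stair hl hx
    rw [stair_apply_lattice hl, leftLim_stair_lattice hl, affineCalibration, affineCalibration,
      mul_div_cancel_left₀ _ hM, mul_div_cancel_left₀ _ hM,
      show p + 2 * H * k - (p + 2 * H * (k + 1 / 2)) = -H by ring,
      show p + 2 * H * k - (p + 2 * H * (k - 1 / 2)) = H by ring,
      potential_of_abs_le (by rw [abs_neg, abs_of_pos hH]),
      potential_of_abs_le (by rw [abs_of_pos hH]), hα]
    linarith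

/-! ### Rigidity for nonzero slope -/

/-- `p` and `q` are consecutive jump points of `v`. -/
structure ConsecutiveJumps (v : ℝ → ℝ) (p q : ℝ) : Prop where
  lt : p < q
  left : ¬ ContinuousAt v p
  right : ¬ ContinuousAt v q
  between : ∀ x ∈ Ioo p q, ContinuousAt v x

lemma eq_zero_of_mul_sq_nonpos {x y : ℝ} (hx : 0 < x) (h : x * y ^ 2 ≤ 0) : y = 0 :=
  pow_eq_zero_iff two_ne_zero |>.1 <| (sq_nonneg y).antisymm' (nonpos_of_mul_nonpos_right h hx)

lemma nonpos_of_forall_nat_mul_le {x y : ℝ} (h : ∀ n : ℕ, n * x ≤ y) : x ≤ 0 := by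
  by_contra! hx
  obtain ⟨n, hn⟩ := exists_nat_gt (y / x)
  exact ((div_lt_iff₀ hx).1 hn).not_ge (h n)

lemma exists_nat_sub_one_mul_le_and_le_mul {L d : ℝ} (hL : 0 < L) (hd : 0 < d) :
    ∃ m : ℕ, 1 ≤ m ∧ (m - 1) * d ≤ L ∧ L ≤ m * d := by
  have hceil := Nat.ceil_lt_add_one (div_pos hL hd).le
  exact ⟨⌈L / d⌉₊, Nat.one_le_ceil_iff.2 (div_pos hL hd),
    (le_div_iff₀ hd).1 (by linarith), (div_le_iff₀ hd).1 (Nat.le_ceil _)⟩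

section Rigidity

variable (hv : IsEntireLocalMinJF α β (fun x => M * x) v)
include hv

lemma ConsecutiveJumps.eq_midpoint (hpq : ConsecutiveJumps v p q) (hα : 0 ≤ α) (hβ : 0 < β) :
    ∀ x ∈ Ico p q, v x = M * ((p + q) / 2) := by
  have hconst : ∀ x ∈ Ico p q, v x = v p :=
    (hv.isStep (p - 1) q).eq_left_of_continuousAt ⟨sub_one_lt p, hpq.lt⟩ hpq.between
  have hle := hv.JF_le_of_jump (memLp_affine M) (fun a b => isStep_const a b (M * ((p + q) / 2)))
    hα hpq.lt hpq.left hpq.right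
  rw [JF_of_eq_const fun x hx => hconst x ⟨hx.1.le, hx.2⟩, JF_of_eq_const fun _ _ => rfl] at hle
  have hint := le_of_mul_le_mul_left hle hβ
  rw [integral_Ioo_sq_sub_affine _ _ hpq.lt.le, integral_Ioo_sq_sub_affine _ _ hpq.lt.le] at hint
  have hsq : (q - p) * (v p - M * ((p + q) / 2)) ^ 2 ≤ 0 := by linarith
  have hzero := eq_zero_of_mul_sq_nonpos (sub_pos.2 hpq.lt) hsq
  exact fun x hx => (hconst x hx).trans (sub_eq_zero.1 hzero)

lemma ConsecutiveJumps.JF_eq (hpq : ConsecutiveJumps v p q) (hα : 0 ≤ α) (hβ : 0 < β) :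
    JF α β (fun x => M * x) p q v = β * M ^ 2 * (q - p) ^ 3 / 12 := by
  have hmid : ∀ x ∈ Ioo p q, v x = M * ((p + q) / 2) := fun x hx =>
    hpq.eq_midpoint hv hα hβ x ⟨hx.1.le, hx.2⟩
  rw [JF_of_eq_const hmid, integral_Ioo_sq_sub_affine _ _ hpq.lt.le]
  ring

lemma ConsecutiveJumps.sub_eq_sub {r : ℝ} (hpq : ConsecutiveJumps v p q)
    (hqr : ConsecutiveJumps v q r) (hα : 0 ≤ α) (hβ : 0 < β) (hM : M ≠ 0) : r - q = q - p := by
  -- compare with two steps of equal length on `(p, r)`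
  have hpr : p < r := hpq.lt.trans hqr.lt
  have hl : 0 < (r - p) / 2 := by linarith
  have hle := hv.JF_le_of_jump (memLp_affine M) (isStep_stair hl M p) hα hpr hpq.left hqr.right
  have hstair := JF_stair hl α β hM p one_le_two
  rw [Nat.cast_ofNat, div_mul_cancel₀ _ two_ne_zero, add_sub_cancel] at hstair
  rw [hstair, JF_split (hv.isStep p r) (memLp_affine M p r) ⟨hpq.lt, hqr.lt⟩,
    hpq.JF_eq hv hα hβ, hqr.JF_eq hv hα hβ, jumpCost_of_not_continuousAt hpq.right] at hle
  have hsq : β * M ^ 2 * (r - p) * ((r - q) - (q - p)) ^ 2 ≤ 0 := by linarith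
  exact sub_eq_zero.1 <| eq_zero_of_mul_sq_nonpos (mul_pos (by positivity) (sub_pos.2 hpr)) hsq

variable (hβ : 0 < β) (hM : M ≠ 0) (hH : 0 < H) (hα : α = 4 / 3 * (β * M ^ 2) * H ^ 3)
include hβ hM hH hα

lemma IsEntireLocalMinJF.JF_affine_le (hab : a < b) :
    JF α β (fun x => M * x) a b v ≤ β * M ^ 2 * H ^ 2 * (b - a) + 2 * α := by
  have hlen : 0 < b - a := sub_pos.2 hab
  obtain ⟨m, hm, hm_le, hle_m⟩ :=
    exists_nat_sub_one_mul_le_and_le_mul hlen (show 0 < 2 * H by positivity)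
  have hm₀ : (0 : ℝ) < m := by positivity
  obtain ⟨l, hlm⟩ : ∃ l, l * m = b - a := ⟨(b - a) / m, div_mul_cancel₀ _ hm₀.ne'⟩
  have hl : 0 < l := pos_of_mul_pos_left (hlm ▸ hlen) hm₀.le
  have hl_le : l ≤ 2 * H := le_of_mul_le_mul_right (by linarith) hm₀
  have hα₀ : 0 ≤ α := hα ▸ by positivity
  have hle := hv.JF_le_add_two_mul (memLp_affine M) (isStep_stair hl M a) hα₀ hab
  have hstair := JF_stair hl α β hM a hm
  rw [hlm, add_sub_cancel] at hstair
  have hjumps : α * (m - 1) ≤ 2 / 3 * (β * M ^ 2 * H ^ 2) * (b - a) := by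
    have := mul_le_mul_of_nonneg_left hm_le (show 0 ≤ 2 / 3 * (β * M ^ 2 * H ^ 2) by positivity)
    rw [hα]
    linarith
  have hfidelity : β * M ^ 2 * l ^ 3 / 12 * m ≤ 1 / 3 * (β * M ^ 2 * H ^ 2) * (b - a) := calc
    _ = β * M ^ 2 * (b - a) / 12 * l ^ 2 := by rw [← hlm]; ring
    _ ≤ β * M ^ 2 * (b - a) / 12 * (2 * H) ^ 2 := by gcongr
    _ = _ := by ring
  linarith

lemma IsEntireLocalMinJF.exists_jump (a : ℝ) : (jumpSet a (a + 6 * H) v).Nonempty := by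
  by_contra! hempty
  have hlt : a < a + 6 * H := by linarith
  obtain ⟨c, hc⟩ := (hv.isStep a (a + 6 * H)).exists_eq_const_of_continuousAt fun x hx =>
    not_not.1 fun hjump => (hempty ▸ ⟨hx, hjump⟩ : x ∈ (∅ : Set ℝ))
  have hle := hv.JF_affine_le hβ hM hH hα hlt
  rw [JF_of_eq_const hc, integral_Ioo_sq_sub_affine _ _ hlt.le, hα] at hle
  have hsq : 0 ≤ β * (6 * H * (c - M * ((a + (a + 6 * H)) / 2)) ^ 2) := by positivity
  have hpos : 0 < β * M ^ 2 * H ^ 3 := by positivity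
  linarith

lemma IsEntireLocalMinJF.exists_next (hp : ¬ ContinuousAt v p) : ∃ q, ConsecutiveJumps v p q := by
  obtain ⟨q, hq, hc⟩ := (hv.isStep _ _).exists_first_jump (hv.exists_jump hβ hM hH hα p)
  exact ⟨q, hq.1.1, hp, hq.2, hc⟩

lemma IsEntireLocalMinJF.exists_prev (hq : ¬ ContinuousAt v q) : ∃ p, ConsecutiveJumps v p q := by
  have hjump := hv.exists_jump hβ hM hH hα (q - 6 * H)
  rw [sub_add_cancel] at hjump
  obtain ⟨p, hp, hc⟩ := (hv.isStep _ _).exists_last_jump hjump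
  exact ⟨p, hp.1.2, hp.2, hq, hc⟩

lemma ConsecutiveJumps.add_mul_int {d : ℝ} (h : ConsecutiveJumps v p (p + d)) (k : ℤ) :
    ConsecutiveJumps v (p + d * k) (p + d * (k + 1)) := by
  have hα₀ : 0 ≤ α := hα ▸ by positivity
  induction k using Int.induction_on with
  | zero => simpa using h
  | succ k ih =>
    obtain ⟨r, hr⟩ := hv.exists_next hβ hM hH hα ih.right
    have hlen := ih.sub_eq_sub hv hr hα₀ hβ hM
    push_cast at hr hlen ⊢
    convert hr using 1
    linarith
  | pred k ih =>
    obtain ⟨r, hr⟩ := hv.exists_prev hβ hM hH hα ih.left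
    have hlen := hr.sub_eq_sub hv ih hα₀ hβ hM
    push_cast at hr hlen ih ⊢
    convert hr using 1 <;> linarith

lemma IsEntireLocalMinJF.exists_eq_stair : ∃ p l, 0 < l ∧ v = stair M p l := by
  have hα₀ : 0 ≤ α := hα ▸ by positivity
  obtain ⟨p, hp⟩ := hv.exists_jump hβ hM hH hα 0
  obtain ⟨q, hpq⟩ := hv.exists_next hβ hM hH hα hp.2
  have hl : 0 < q - p := sub_pos.2 hpq.lt
  refine ⟨p, q - p, hl, funext fun x => ?_⟩
  obtain ⟨k, hk⟩ := exists_mem_Ico_lattice hl p x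
  have hsteps := (show ConsecutiveJumps v p (p + (q - p)) by rwa [add_sub_cancel]).add_mul_int
    hv hβ hM hH hα k
  rw [stair_of_mem_Ico hl hk, hsteps.eq_midpoint hv hα₀ hβ x hk]
  ring

end Rigidity

lemma step_length_of_isEntireLocalMinJF_stair {l : ℝ} (hβ : 0 < β) (hM : M ≠ 0) (hH : 0 < H)
    (hα : α = 4 / 3 * (β * M ^ 2) * H ^ 3) (hl : 0 < l)
    (h : IsEntireLocalMinJF α β (fun x => M * x) (stair M p l)) : l = 2 * H := by
  have hexcess : β * M ^ 2 / 12 * (l + 4 * H) * (l - 2 * H) ^ 2 ≤ 0 := by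
    refine nonpos_of_forall_nat_mul_le (y := 3 * α) fun n => ?_
    rcases n.eq_zero_or_pos with rfl | hn
    · rw [hα, Nat.cast_zero, zero_mul]; positivity
    have hn' : (0 : ℝ) < n := mod_cast hn
    have hle := h.JF_affine_le hβ hM hH hα (show p < p + l * n by linarith [mul_pos hl hn'])
    rw [JF_stair hl α β hM p hn, hα] at hle
    rw [hα]
    linarith
  exact sub_eq_zero.1 <| eq_zero_of_mul_sq_nonpos (by positivity) hexcess

lemma isEntireLocalMinJF_affine_iff (hβ : 0 < β) (hM : M ≠ 0) (hH : 0 < H)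
    (hα : α = 4 / 3 * (β * M ^ 2) * H ^ 3) :
    IsEntireLocalMinJF α β (fun x => M * x) v ↔ ∃ p, v = stair M p (2 * H) := by
  constructor
  · intro hv
    obtain ⟨p, l, hl, rfl⟩ := hv.exists_eq_stair hβ hM hH hα
    exact ⟨p, by rw [step_length_of_isEntireLocalMinJF_stair hβ hM hH hα hl hv]⟩
  · rintro ⟨p, rfl⟩
    exact isEntireLocalMinJF_stair hβ.le hM hH hα p

/-! ### Zero slope -/

section ZeroSlope

variable (hv : IsEntireLocalMinJF α β (fun x => 0 * x) v)
include hv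

lemma IsEntireLocalMinJF.eq_zero_of_eq_const {c : ℝ} (hα : 0 ≤ α) (hβ : 0 < β)
    (hc : ∀ n : ℕ, ∃ a : ℝ, ∀ x ∈ Ioo a (a + n), v x = c) : c = 0 := by
  refine eq_zero_of_mul_sq_nonpos hβ <| nonpos_of_forall_nat_mul_le (y := 2 * α) fun n => ?_
  rcases n.eq_zero_or_pos with rfl | hn
  · rw [Nat.cast_zero, zero_mul]; positivity
  obtain ⟨a, ha⟩ := hc n
  have hlt : a < a + n := by simpa using hn
  have hle := hv.JF_le_add_two_mul (memLp_affine 0) (fun a b => isStep_const a b 0) hα hlt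
  rw [JF_of_eq_const ha, JF_of_eq_const fun _ _ => rfl, integral_Ioo_sq_sub_affine _ _ hlt.le,
    integral_Ioo_sq_sub_affine _ _ hlt.le] at hle
  linarith

lemma IsEntireLocalMinJF.eq_zero_of_jumps (hα : 0 < α) (hβ : 0 < β) (hp : ¬ ContinuousAt v p)
    (hq : ¬ ContinuousAt v q) : ∀ x ∈ Ico p q, v x = 0 := by
  intro x hx
  have hpq : p < q := hx.1.trans_lt hx.2
  have hle := hv.JF_le_of_jump (memLp_affine 0) (fun a b => isStep_const a b 0) hα.le hpq hp hq
  rw [JF_of_eq_const fun _ _ => rfl, integral_Ioo_sq_sub_affine _ _ hpq.le] at hle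
  have hcard : α * (jumpSet p q v).ncard ≤ α * 0 := (mul_ncard_le_JF hβ.le).trans (by linarith)
  have hempty : jumpSet p q v = ∅ := (ncard_eq_zero (hv.isStep p q).finite_jumpSet).1 <| by
    exact_mod_cast (le_of_mul_le_mul_left hcard hα).antisymm (Nat.cast_nonneg _)
  have hjumps : ConsecutiveJumps v p q := ⟨hpq, hp, hq, fun y hy => not_not.1 fun hjump =>
    eq_empty_iff_forall_notMem.1 hempty y ⟨hy, hjump⟩⟩
  rw [hjumps.eq_midpoint hv hα.le hβ x hx, zero_mul]

lemma IsEntireLocalMinJF.eq_zero (hα : 0 < α) (hβ : 0 < β) (x : ℝ) : v x = 0 := by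
  have eq_of_continuousAt : ∀ y z, y ≤ z → (∀ t ∈ Ioc y z, ContinuousAt v t) → v y = v z :=
    fun y z hyz hc => (hv.isStep (y - 1) (z + 1)).constBetween_jumpSet (sub_one_lt y) hyz
      (lt_add_one z) <| disjoint_left.2 fun t ht hjump => hjump.2 (hc t ht)
  by_cases hleft : ∀ t ≤ x, ContinuousAt v t
  · refine hv.eq_zero_of_eq_const hα.le hβ fun n => ⟨x - n, fun y hy => ?_⟩
    rw [sub_add_cancel] at hy
    exact eq_of_continuousAt y x hy.2.le fun t ht => hleft t ht.2
  by_cases hright : ∀ t > x, ContinuousAt v t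
  · exact hv.eq_zero_of_eq_const hα.le hβ fun n =>
      ⟨x, fun y hy => (eq_of_continuousAt x y hy.1.le fun t ht => hright t ht.1).symm⟩
  push Not at hleft hright
  obtain ⟨p, hpx, hp⟩ := hleft
  obtain ⟨q, hxq, hq⟩ := hright
  exact hv.eq_zero_of_jumps hα hβ hp hq x ⟨hpx, hxq⟩

end ZeroSlope

lemma isEntireLocalMinJF_zero_mul_iff (hα : 0 < α) (hβ : 0 < β) :
    IsEntireLocalMinJF α β (fun x => 0 * x) v ↔ ∀ x, v x = 0 := by
  refine ⟨fun hv => hv.eq_zero hα hβ, fun hv a b _ => ?_⟩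
  have hconst : ∀ x ∈ Ioo a b, v x = 0 := fun x _ => hv x
  refine ⟨isStep_of_eq_const hconst, fun u _ _ => ?_⟩
  have hzero : JF α β (fun x => 0 * x) a b v = 0 := by simp [JF_of_eq_const hconst]
  exact hzero.trans_le (JF_nonneg hα.le hβ.le)

/-! ### Oblique translations -/

lemma canStair_sub_add_eq_stair (hH : 0 < H) (M t x : ℝ) :
    canStair H (M * H) (x - H * t) + M * H * t = stair M (H * t - H) (2 * H) x := by
  have harg : ((x - H * t) / H + 1) / 2 = (x - (H * t - H)) / (2 * H) := by field_simp; ring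
  rw [canStair, stairS, stair, harg]
  ring

lemma stair_add_mul_int {l : ℝ} (hl : 0 < l) (M p : ℝ) (n : ℤ) :
    stair M (p + l * n) l = stair M p l := by
  ext x
  have harg : (x - (p + l * n)) / l = (x - p) / l - n := by field_simp; ring
  rw [stair, stair, harg, Int.floor_sub_intCast]
  push_cast
  ring

lemma obl_iff_exists_eq_stair (hH : 0 < H) (M : ℝ) (v : ℝ → ℝ) :
    Obl H (M * H) v ↔ ∃ p, v = stair M p (2 * H) := by
  have hl : 0 < 2 * H := by positivity
  simp only [Obl, canStair_sub_add_eq_stair hH]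
  constructor
  · rintro ⟨t, -, h⟩
    exact ⟨H * t - H, funext h⟩
  · rintro ⟨p, rfl⟩
    obtain ⟨n, hn⟩ := exists_mem_Ico_lattice hl 0 (p + 2 * H)
    refine ⟨(p - 2 * H * n) / H + 1, ⟨?_, ?_⟩, fun x => ?_⟩
    · rw [← sub_le_iff_le_add, le_div_iff₀ hH]
      linarith [hn.1]
    · rw [← le_sub_iff_add_le, div_le_iff₀ hH]
      linarith [hn.2]
    · rw [← stair_add_mul_int hl M p (-n)]
      congr 1
      push_cast
      field_simp
      ring

lemma obl_zero_iff : Obl 0 0 v ↔ ∀ x, v x = 0 := by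
  simp only [Obl, canStair, zero_mul, add_zero]
  exact ⟨fun ⟨_, _, h⟩ => h, fun h => ⟨0, by norm_num, h⟩⟩

lemma eq_four_thirds_mul_pow {γ : ℝ} (hα : 0 ≤ α) (hγ : 0 < γ) :
    α = 4 / 3 * γ * ((1 / 2) * (6 * α / γ) ^ ((1 : ℝ) / 3)) ^ 3 := by
  have hcube : ((6 * α / γ) ^ ((1 : ℝ) / 3)) ^ 3 = 6 * α / γ := by
    rw [← Real.rpow_natCast, ← Real.rpow_mul (by positivity)]
    norm_num
  rw [mul_pow, hcube]
  field_simp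
  ring

/-- Characterization of entire local minimizers of `JF(α,β,Mx,·,·)`:
they are exactly the oblique translations of the canonical `(H,V)`-staircase with
`H = (1/2)(6α/(βM²))^{1/3}` and `V = MH` (the zero function when `M = 0`). -/
theorem entire_local_minimizers_characterization
    (α β M : ℝ) (hα : 0 < α) (hβ : 0 < β) :
    ∀ v : ℝ → ℝ,
      IsEntireLocalMinJF α β (fun x => M * x) v ↔
        Obl ((1 / 2) * (6 * α / (β * M ^ 2)) ^ ((1 : ℝ) / 3))
          (M * ((1 / 2) * (6 * α / (β * M ^ 2)) ^ ((1 : ℝ) / 3))) v := by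
  intro v
  rcases eq_or_ne M 0 with rfl | hM
  · -- the quotient is `x / 0 = 0`, so that `H = V = 0`
    have hdeg : (1 : ℝ) / 2 * (6 * α / (β * 0 ^ 2)) ^ ((1 : ℝ) / 3) = 0 := by norm_num
    rw [isEntireLocalMinJF_zero_mul_iff hα hβ, hdeg, zero_mul, obl_zero_iff]
  · have hγ : 0 < β * M ^ 2 := by positivity
    have hH : 0 < (1 : ℝ) / 2 * (6 * α / (β * M ^ 2)) ^ ((1 : ℝ) / 3) := by positivity
    rw [isEntireLocalMinJF_affine_iff hβ hM hH (eq_four_thirds_mul_pow hα.le hγ),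
      obl_iff_exists_eq_stair hH]

end PeronaMalik
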